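/- arXiv:1712.08407 — 3 statements merged into one kernel-verified Lean document; each statement's English description precedes it below -/
import Mathlib

section
/- Suppose the bipartite graph G has a perfect matching, and let γ be a positive integer. Then there exists a set T ⊆ E with |T| ≤ γ such that the graph (V, Ṽ, E ∖ T) has no perfect matching if and only if there exists a set T̃ ⊆ E_K with |T̃| ≤ γ such that B − T̃ has no perfect matching. (Paper's Theorem 1, combinatorial core of the NP-completeness reduction.) -/
namespace ResilientFeedback

/-- Vertices of the closed-loop system bipartite graph: `Sum.inl i` is `x_i`
(resp. `x'_i` on the left side), `Sum.inr (Sum.inl i)` is `u_i` (resp. `u'_i`),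
and `Sum.inr (Sum.inr i)` is `y_i` (resp. `y'_i`).  Indices are 1-based. -/
abbrev V3 : Type := ℕ ⊕ ℕ ⊕ ℕ

def xv (i : ℕ) : V3 := Sum.inl i
def uv (i : ℕ) : V3 := Sum.inr (Sum.inl i)
def yv (i : ℕ) : V3 := Sum.inr (Sum.inr i)

/-- `M` is a matching of the edge set `Ed`: a subset of `Ed` in which no two
distinct edges share an endpoint. -/
def IsMatching {α β : Type} (Ed M : Set (α × β)) : Prop :=
  M ⊆ Ed ∧ ∀ e ∈ M, ∀ f ∈ M, e ≠ f → e.1 ≠ f.1 ∧ e.2 ≠ f.2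

/-- A perfect matching of a bipartite graph with left vertex set `L`:
a matching covering every vertex of `L`. -/
def IsPerfectMatchingLeft {α β : Type} (L : Set α) (Ed M : Set (α × β)) : Prop :=
  IsMatching Ed M ∧ ∀ a ∈ L, ∃ b, (a, b) ∈ M

/-- A perfect matching of a bipartite graph with left vertex set `L` and right
vertex set `R` of equal size: a matching covering every vertex of `L` and of `R`. -/
def IsPerfectMatchingOn {α β : Type} (L : Set α) (R : Set β) (Ed M : Set (α × β)) : Prop :=
  IsMatching Ed M ∧ (∀ a ∈ L, ∃ b, (a, b) ∈ M) ∧ (∀ b ∈ R, ∃ a, (a, b) ∈ M)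

/-- The (left, and identically the right) vertex set of the closed-loop system
bipartite graph `B`: `x'_1, …, x'_{s+2}` (resp. `x_1,…,x_{s+2}`), `u'_1,…,u'_s`, `y'_1,…,y'_r`. -/
def vertsB (r s : ℕ) : Set V3 :=
  {v | (∃ i ∈ Set.Icc 1 (s + 2), v = xv i) ∨ (∃ i ∈ Set.Icc 1 s, v = uv i) ∨
       (∃ i ∈ Set.Icc 1 r, v = yv i)}

/-- The edges of the closed-loop system bipartite graph `B` built from the bipartite
graph `G = ({1,…,r}, {1,…,s}, E)`; a pair `(l, rgt)` is an edge from left vertex `l`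
to right vertex `rgt`. -/
def edgesB (r s : ℕ) (E : Set (ℕ × ℕ)) : Set (V3 × V3) :=
  {e | (∃ j ∈ Set.Icc 1 (s + 2), e = (xv 2, xv j)) ∨
       (∃ i ∈ Set.Icc 1 (s + 2), e = (xv i, xv 2)) ∨
       (∃ i ∈ Set.Icc 3 (s - r + 2), ∃ j ∈ Set.Icc 3 (s + 2), e = (xv i, xv j)) ∨
       (∃ i ∈ Set.Icc (s - r + 3) (s + 2), ∃ j ∈ Set.Icc 1 s, e = (xv i, uv j)) ∨
       (∃ i ∈ Set.Icc 1 r, ∃ j ∈ Set.Icc 3 (s + 2), e = (yv i, xv j)) ∨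
       (∃ i j, (j, i) ∈ E ∧ e = (uv i, yv j)) ∨
       (∃ i ∈ Set.Icc 1 s, e = (uv i, uv i)) ∨
       (∃ i ∈ Set.Icc 1 r, e = (yv i, yv i))}

/-- The feedback edges `E_K` of `B`: `u'_i — y_j` for exactly those pairs with
`(v_j, ṽ_i) ∈ E`. -/
def EKset (E : Set (ℕ × ℕ)) : Set (V3 × V3) :=
  {e | ∃ i j, (j, i) ∈ E ∧ e = (uv i, yv j)}

/-!
Deleting feedback edges from `B` amounts to building `B` from a smaller graph `G`, so it suffices
to show that `G` has a perfect matching if and only if `B` has one.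

Given a perfect matching of `B`, the vertex `x_1` must be matched with `x'_2`. The `s` vertices
`x_3, …, x_{s+2}` are then matched with vertices among `x'_3, …, x'_{s-r+2}, y'_1, …, y'_r`. There
are only `s` of these, so all of them are used up. Hence no edge `y'_j — y_j` is in the matching,
and every `y_j` is matched along a feedback edge, that is, an edge of `G`.

Conversely, view a perfect matching of `B` as a permutation of its vertices. An edge `(v_j, ṽ_i)`
of a perfect matching of `G` becomes the 3-cycle `x_{s-r+2+j} → u_i → y_j → x_{s-r+2+j}`; then
exchange `x_1` with `x_2` and fix all other vertices.
-/

open Set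

section Matching

variable {α β : Type} {L : Set α} {R : Set β} {Ed M : Set (α × β)}

theorem IsMatching.right_unique (hM : IsMatching Ed M) {a : α} {b c : β}
    (hb : (a, b) ∈ M) (hc : (a, c) ∈ M) : b = c := by
  by_contra hne
  exact (hM.2 _ hb _ hc fun h => hne (congrArg Prod.snd h)).1 rfl

theorem IsMatching.left_unique (hM : IsMatching Ed M) {a b : α} {c : β}
    (ha : (a, c) ∈ M) (hb : (b, c) ∈ M) : a = b := by
  by_contra hne
  exact (hM.2 _ ha _ hb fun h => hne (congrArg Prod.fst h)).2 rfl

theorem isMatching_graphOn {f : α → β} (hf : InjOn f L) (hEd : ∀ a ∈ L, (a, f a) ∈ Ed) :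
    IsMatching Ed (L.graphOn f) := by
  refine ⟨image_subset_iff.2 hEd, ?_⟩
  rintro _ ⟨a, ha, rfl⟩ _ ⟨b, hb, rfl⟩ hne
  have hab : a ≠ b := by
    rintro rfl
    exact hne rfl
  exact ⟨hab, hf.ne ha hb hab⟩

theorem exists_isPerfectMatchingLeft_iff_injOn [Nonempty β] :
    (∃ M, IsPerfectMatchingLeft L Ed M) ↔
      ∃ f : α → β, InjOn f L ∧ ∀ a ∈ L, (a, f a) ∈ Ed := by
  constructor
  · rintro ⟨M, hM, hL⟩
    choose! f hf using hL
    refine ⟨f, fun a ha b hb hab => hM.left_unique (hf a ha) ?_, fun a ha => hM.1 (hf a ha)⟩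
    exact hab ▸ hf b hb
  · rintro ⟨f, hf, hEd⟩
    exact ⟨L.graphOn f, isMatching_graphOn hf hEd, fun a ha => ⟨f a, mem_image_of_mem _ ha⟩⟩

theorem exists_isPerfectMatchingOn_iff_bijOn [Nonempty β] (hLR : Ed ⊆ L ×ˢ R) :
    (∃ M, IsPerfectMatchingOn L R Ed M) ↔
      ∃ f : α → β, BijOn f L R ∧ ∀ a ∈ L, (a, f a) ∈ Ed := by
  constructor
  · rintro ⟨M, hM, hL, hR⟩
    choose! f hf using hL
    refine ⟨f, ⟨fun a ha => (hLR (hM.1 (hf a ha))).2, fun a ha b hb hab => ?_, fun b hb => ?_⟩,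
      fun a ha => hM.1 (hf a ha)⟩
    · exact hM.left_unique (hf a ha) (hab ▸ hf b hb)
    · obtain ⟨a, hab⟩ := hR b hb
      have ha : a ∈ L := (hLR (hM.1 hab)).1
      exact ⟨a, ha, hM.right_unique (hf a ha) hab⟩
  · rintro ⟨f, hf, hEd⟩
    refine ⟨L.graphOn f, isMatching_graphOn hf.injOn hEd,
      fun a ha => ⟨f a, mem_image_of_mem _ ha⟩, fun b hb => ?_⟩
    obtain ⟨a, ha, rfl⟩ := hf.surjOn hb
    exact ⟨a, mem_image_of_mem _ ha⟩

end Matching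

theorem xv_injective : Function.Injective xv := Sum.inl_injective

theorem yv_injective : Function.Injective yv := Sum.inr_injective.comp Sum.inr_injective

/-- The feedback edge `u'_i — y_j` of `B` that stands for the edge `(v_j, ṽ_i)` of `G`. -/
def feedbackEdge (e : ℕ × ℕ) : V3 × V3 := (uv e.2, yv e.1)

theorem feedbackEdge_injective : Function.Injective feedbackEdge := by
  rintro ⟨j, i⟩ ⟨j', i'⟩ h
  simpa [feedbackEdge, uv, yv, and_comm] using h

theorem EKset_eq_image (E : Set (ℕ × ℕ)) : EKset E = feedbackEdge '' E := by
  ext e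
  simp only [EKset, feedbackEdge, mem_ofPred_eq, mem_image, Prod.exists, eq_comm (a := e)]
  exact exists_comm

section ClosedLoop

variable {r s : ℕ} {E : Set (ℕ × ℕ)}

theorem edgesB_eq_union (r s : ℕ) (E : Set (ℕ × ℕ)) :
    edgesB r s E = edgesB r s ∅ ∪ feedbackEdge '' E := by
  ext e
  grind [edgesB, feedbackEdge]

theorem disjoint_edgesB_empty_image_feedbackEdge (T : Set (ℕ × ℕ)) :
    Disjoint (edgesB r s ∅) (feedbackEdge '' T) := by
  rw [disjoint_right]
  rintro _ ⟨e, -, rfl⟩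
  simp [edgesB, feedbackEdge, xv, uv, yv]

theorem edgesB_sdiff_image_feedbackEdge (T : Set (ℕ × ℕ)) :
    edgesB r s E \ feedbackEdge '' T = edgesB r s (E \ T) := by
  rw [edgesB_eq_union r s E, edgesB_eq_union r s (E \ T), union_sdiff_distrib,
    (disjoint_edgesB_empty_image_feedbackEdge T).sdiff_eq_left,
    image_sdiff feedbackEdge_injective]

theorem xv_mem_vertsB {i : ℕ} (hi : i ∈ Icc 1 (s + 2)) : xv i ∈ vertsB r s := .inl ⟨i, hi, rfl⟩

theorem uv_mem_vertsB {i : ℕ} (hi : i ∈ Icc 1 s) : uv i ∈ vertsB r s := .inr (.inl ⟨i, hi, rfl⟩)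

theorem yv_mem_vertsB {j : ℕ} (hj : j ∈ Icc 1 r) : yv j ∈ vertsB r s := .inr (.inr ⟨j, hj, rfl⟩)

theorem finite_vertsB (r s : ℕ) : (vertsB r s).Finite := by
  refine (((finite_Icc 1 (s + 2)).image xv).union
    (((finite_Icc 1 s).image uv).union ((finite_Icc 1 r).image yv))).subset ?_
  rintro a (⟨i, hi, rfl⟩ | ⟨i, hi, rfl⟩ | ⟨i, hi, rfl⟩)
  · exact .inl (mem_image_of_mem _ hi)
  · exact .inr (.inl (mem_image_of_mem _ hi))
  · exact .inr (.inr (mem_image_of_mem _ hi))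

theorem edgesB_subset_prod (hE : E ⊆ Icc 1 r ×ˢ Icc 1 s) :
    edgesB r s E ⊆ vertsB r s ×ˢ vertsB r s := by
  rintro _ (⟨j, hj, rfl⟩ | ⟨i, hi, rfl⟩ | ⟨i, hi, j, hj, rfl⟩ | ⟨i, hi, j, hj, rfl⟩ |
    ⟨i, hi, j, hj, rfl⟩ | ⟨i, j, hij, rfl⟩ | ⟨i, hi, rfl⟩ | ⟨i, hi, rfl⟩)
  · exact ⟨xv_mem_vertsB (by simp), xv_mem_vertsB hj⟩
  · exact ⟨xv_mem_vertsB hi, xv_mem_vertsB (by simp)⟩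
  · exact ⟨xv_mem_vertsB (by grind), xv_mem_vertsB (by grind)⟩
  · exact ⟨xv_mem_vertsB (by grind), uv_mem_vertsB hj⟩
  · exact ⟨yv_mem_vertsB hi, xv_mem_vertsB (by grind)⟩
  · exact ⟨uv_mem_vertsB (hE hij).2, yv_mem_vertsB (hE hij).1⟩
  · exact ⟨uv_mem_vertsB hi, uv_mem_vertsB hi⟩
  · exact ⟨yv_mem_vertsB hi, yv_mem_vertsB hi⟩

theorem eq_or_mem_of_mem_edgesB_xv {a : V3} {j : ℕ} (hj : j ≠ 2)
    (h : (a, xv j) ∈ edgesB r s E) :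
    a = xv 2 ∨ 3 ≤ j ∧ a ∈ xv '' Icc 3 (s - r + 2) ∪ yv '' Icc 1 r := by
  simp only [edgesB, mem_ofPred_eq, Prod.mk.injEq] at h
  grind [xv, uv, yv]

theorem eq_or_exists_of_mem_edgesB_yv {a : V3} {j : ℕ} (h : (a, yv j) ∈ edgesB r s E) :
    a = yv j ∨ ∃ i, a = uv i ∧ (j, i) ∈ E := by
  simp only [edgesB, mem_ofPred_eq, Prod.mk.injEq] at h
  grind [xv, uv, yv]

section FromClosedLoop

variable {f : V3 → V3}

theorem apply_xv_two_of_bijOn (hf : BijOn f (vertsB r s) (vertsB r s))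
    (hfE : ∀ a ∈ vertsB r s, (a, f a) ∈ edgesB r s E) : f (xv 2) = xv 1 := by
  obtain ⟨a, ha, hfa⟩ := hf.surjOn (xv_mem_vertsB (i := 1) (by simp))
  obtain rfl | ⟨three_le_one, -⟩ := eq_or_mem_of_mem_edgesB_xv (by decide) (hfa ▸ hfE a ha)
  · exact hfa
  · contradiction

theorem image_eq_image_xv_of_bijOn (hrs : r ≤ s) (hf : BijOn f (vertsB r s) (vertsB r s))
    (hfE : ∀ a ∈ vertsB r s, (a, f a) ∈ edgesB r s E) :
    f '' (xv '' Icc 3 (s - r + 2) ∪ yv '' Icc 1 r) = xv '' Icc 3 (s + 2) := by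
  set S := xv '' Icc 3 (s - r + 2) ∪ yv '' Icc 1 r
  have hSfin : S.Finite := ((finite_Icc _ _).image _).union ((finite_Icc _ _).image _)
  have hScard : S.ncard ≤ s := calc
    S.ncard ≤ (Icc 3 (s - r + 2)).ncard + (Icc 1 r).ncard :=
      (ncard_union_le _ _).trans (add_le_add (ncard_image_le (finite_Icc _ _))
        (ncard_image_le (finite_Icc _ _)))
    _ = s := by simp only [ncard_Icc_nat]; omega
  have hsub : xv '' Icc 3 (s + 2) ⊆ f '' S := by
    rintro _ ⟨j, hj, rfl⟩
    obtain ⟨a, ha, hfa⟩ := hf.surjOn (xv_mem_vertsB (i := j) (by grind))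
    obtain rfl | ⟨-, haS⟩ := eq_or_mem_of_mem_edgesB_xv (by grind) (hfa ▸ hfE a ha)
    · have hj1 : j = 1 := xv_injective (hfa.symm.trans (apply_xv_two_of_bijOn hf hfE))
      grind
    · exact ⟨a, haS, hfa⟩
  refine (eq_of_subset_of_ncard_le hsub ?_ (hSfin.image f)).symm
  calc (f '' S).ncard ≤ s := (ncard_image_le hSfin).trans hScard
    _ = (xv '' Icc 3 (s + 2)).ncard := by simp [ncard_image_of_injective _ xv_injective]

theorem exists_apply_uv_eq_yv_of_bijOn (hrs : r ≤ s) (hf : BijOn f (vertsB r s) (vertsB r s))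
    (hfE : ∀ a ∈ vertsB r s, (a, f a) ∈ edgesB r s E) {j : ℕ} (hj : j ∈ Icc 1 r) :
    ∃ i, f (uv i) = yv j ∧ (j, i) ∈ E := by
  obtain ⟨a, ha, hfa⟩ := hf.surjOn (yv_mem_vertsB hj)
  rcases eq_or_exists_of_mem_edgesB_yv (hfa ▸ hfE a ha) with rfl | ⟨i, rfl, hij⟩
  · have hx : f (yv j) ∈ xv '' Icc 3 (s + 2) :=
      image_eq_image_xv_of_bijOn hrs hf hfE ▸ mem_image_of_mem f (.inr (mem_image_of_mem yv hj))
    rw [hfa] at hx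
    simp [xv, yv] at hx
  · exact ⟨i, hfa, hij⟩

end FromClosedLoop

section ToClosedLoop

variable {m : ℕ → ℕ}

open Classical in
/-- The permutation of the vertices of `B` obtained from the perfect matching `v_j ↦ ṽ_{m j}`
of `G`; its graph is a perfect matching of `B`. -/
noncomputable def closedLoopMap (r s : ℕ) (m : ℕ → ℕ) : V3 → V3
  | .inl i => if i ≤ s - r + 2 then xv (Equiv.swap 1 2 i) else uv (m (i - (s - r + 2)))
  | .inr (.inl i) => if i ∈ m '' Icc 1 r then yv (Function.invFunOn m (Icc 1 r) i) else uv i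
  | .inr (.inr j) => xv (s - r + 2 + j)

theorem closedLoopMap_xv_one : closedLoopMap r s m (xv 1) = xv 2 := by
  simp [closedLoopMap, xv]

theorem closedLoopMap_xv_two : closedLoopMap r s m (xv 2) = xv 1 := by
  simp [closedLoopMap, xv]

theorem closedLoopMap_xv {i : ℕ} (hi : i ∈ Icc 3 (s - r + 2)) :
    closedLoopMap r s m (xv i) = xv i := by
  have hswap : Equiv.swap 1 2 i = i := Equiv.swap_apply_of_ne_of_ne (by grind) (by grind)
  simp [closedLoopMap, xv, hi.2, hswap]

theorem closedLoopMap_xv_add {j : ℕ} (hj : 1 ≤ j) :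
    closedLoopMap r s m (xv (s - r + 2 + j)) = uv (m j) := by
  simp [closedLoopMap, xv, show j ≠ 0 by omega]

theorem closedLoopMap_uv_apply (hm : InjOn m (Icc 1 r)) {j : ℕ} (hj : j ∈ Icc 1 r) :
    closedLoopMap r s m (uv (m j)) = yv j := by
  simp only [closedLoopMap, uv, mem_image_of_mem m hj, if_true, hm.leftInvOn_invFunOn hj]

theorem closedLoopMap_uv {i : ℕ} (hi : i ∉ m '' Icc 1 r) :
    closedLoopMap r s m (uv i) = uv i := by
  simp only [closedLoopMap, uv, hi, if_false]

theorem closedLoopMap_yv (j : ℕ) : closedLoopMap r s m (yv j) = xv (s - r + 2 + j) := rfl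

theorem forall_mem_vertsB_of_cases (hrs : r ≤ s) (m : ℕ → ℕ) {P : V3 → Prop}
    (x_one : P (xv 1)) (x_two : P (xv 2)) (x_fixed : ∀ i ∈ Icc 3 (s - r + 2), P (xv i))
    (x_moved : ∀ j ∈ Icc 1 r, P (xv (s - r + 2 + j))) (u_moved : ∀ j ∈ Icc 1 r, P (uv (m j)))
    (u_fixed : ∀ i ∈ Icc 1 s, i ∉ m '' Icc 1 r → P (uv i)) (y_moved : ∀ j ∈ Icc 1 r, P (yv j)) :
    ∀ a ∈ vertsB r s, P a := by
  rintro _ (⟨i, hi, rfl⟩ | ⟨i, hi, rfl⟩ | ⟨j, hj, rfl⟩)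
  · obtain rfl | rfl | hi' | ⟨j, hj, rfl⟩ :
        i = 1 ∨ i = 2 ∨ i ∈ Icc 3 (s - r + 2) ∨ ∃ j ∈ Icc 1 r, i = s - r + 2 + j := by
      by_cases h : i ≤ s - r + 2
      · grind
      · exact .inr (.inr (.inr ⟨i - (s - r + 2), by grind, by omega⟩))
    exacts [x_one, x_two, x_fixed i hi', x_moved j hj]
  · by_cases h : i ∈ m '' Icc 1 r
    · obtain ⟨j, hj, rfl⟩ := h
      exact u_moved j hj
    · exact u_fixed i hi h
  · exact y_moved j hj

theorem mem_edgesB_closedLoopMap (hrs : r ≤ s) (hm : InjOn m (Icc 1 r))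
    (hmE : ∀ j ∈ Icc 1 r, (j, m j) ∈ E) (hms : ∀ j ∈ Icc 1 r, m j ∈ Icc 1 s) :
    ∀ a ∈ vertsB r s, (a, closedLoopMap r s m a) ∈ edgesB r s E := by
  apply forall_mem_vertsB_of_cases hrs m (P := fun a => (a, closedLoopMap r s m a) ∈ edgesB r s E)
  case x_one =>
    rw [closedLoopMap_xv_one]
    exact .inr (.inl ⟨1, by simp, rfl⟩)
  case x_two =>
    rw [closedLoopMap_xv_two]
    exact .inl ⟨1, by simp, rfl⟩
  case x_fixed =>
    intro i hi
    rw [closedLoopMap_xv hi]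
    exact .inr (.inr (.inl ⟨i, hi, i, by grind, rfl⟩))
  case x_moved =>
    intro j hj
    rw [closedLoopMap_xv_add hj.1]
    exact .inr (.inr (.inr (.inl ⟨_, by grind, m j, hms j hj, rfl⟩)))
  case u_moved =>
    intro j hj
    rw [closedLoopMap_uv_apply hm hj]
    exact .inr (.inr (.inr (.inr (.inr (.inl ⟨m j, j, hmE j hj, rfl⟩)))))
  case u_fixed =>
    intro i hi hi'
    rw [closedLoopMap_uv hi']
    exact .inr (.inr (.inr (.inr (.inr (.inr (.inl ⟨i, hi, rfl⟩))))))
  case y_moved =>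
    intro j hj
    rw [closedLoopMap_yv]
    exact .inr (.inr (.inr (.inr (.inl ⟨j, hj, _, by grind, rfl⟩))))

theorem surjOn_closedLoopMap (hrs : r ≤ s) (hm : InjOn m (Icc 1 r))
    (hms : ∀ j ∈ Icc 1 r, m j ∈ Icc 1 s) :
    SurjOn (closedLoopMap r s m) (vertsB r s) (vertsB r s) := by
  apply forall_mem_vertsB_of_cases hrs m (P := (· ∈ closedLoopMap r s m '' vertsB r s))
  case x_one => exact ⟨xv 2, xv_mem_vertsB (by simp), closedLoopMap_xv_two⟩
  case x_two => exact ⟨xv 1, xv_mem_vertsB (by simp), closedLoopMap_xv_one⟩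
  case x_fixed => exact fun i hi => ⟨xv i, xv_mem_vertsB (by grind), closedLoopMap_xv hi⟩
  case x_moved => exact fun j hj => ⟨yv j, yv_mem_vertsB hj, closedLoopMap_yv j⟩
  case u_moved => exact fun j hj => ⟨_, xv_mem_vertsB (by grind), closedLoopMap_xv_add hj.1⟩
  case u_fixed => exact fun i hi hi' => ⟨uv i, uv_mem_vertsB hi, closedLoopMap_uv hi'⟩
  case y_moved =>
    exact fun j hj => ⟨uv (m j), uv_mem_vertsB (hms j hj), closedLoopMap_uv_apply hm hj⟩

end ToClosedLoop

theorem exists_isPerfectMatchingLeft_iff_closedLoop (hrs : r ≤ s) (hE : E ⊆ Icc 1 r ×ˢ Icc 1 s) :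
    (∃ M, IsPerfectMatchingLeft (Icc 1 r) E M) ↔
      ∃ M, IsPerfectMatchingOn (vertsB r s) (vertsB r s) (edgesB r s E) M := by
  rw [exists_isPerfectMatchingLeft_iff_injOn,
    exists_isPerfectMatchingOn_iff_bijOn (edgesB_subset_prod hE)]
  constructor
  · rintro ⟨m, hm, hmE⟩
    have hms : ∀ j ∈ Icc 1 r, m j ∈ Icc 1 s := fun j hj => (hE (hmE j hj)).2
    have hedge := mem_edgesB_closedLoopMap hrs hm hmE hms
    have hmaps : MapsTo (closedLoopMap r s m) (vertsB r s) (vertsB r s) :=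
      fun a ha => (edgesB_subset_prod hE (hedge a ha)).2
    exact ⟨closedLoopMap r s m, ((finite_vertsB r s).surjOn_iff_bijOn_of_mapsTo hmaps).1
      (surjOn_closedLoopMap hrs hm hms), hedge⟩
  · rintro ⟨f, hf, hfE⟩
    choose! m hm hmE using fun j (hj : j ∈ Icc 1 r) => exists_apply_uv_eq_yv_of_bijOn hrs hf hfE hj
    refine ⟨m, fun j hj k hk hjk => yv_injective ?_, hmE⟩
    rw [← hm j hj, ← hm k hk, hjk]

end ClosedLoop

theorem blocker_correspondence_general (r s γ : ℕ) (hrs : r ≤ s)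
    (E : Set (ℕ × ℕ)) (hE : E ⊆ Set.Icc 1 r ×ˢ Set.Icc 1 s) :
    (∃ T ⊆ E, T.ncard ≤ γ ∧
        ¬ ∃ M, IsPerfectMatchingLeft (Set.Icc 1 r) (E \ T) M) ↔
    (∃ T ⊆ EKset E, T.ncard ≤ γ ∧
        ¬ ∃ M, IsPerfectMatchingOn (vertsB r s) (vertsB r s) (edgesB r s E \ T) M) := by
  rw [EKset_eq_image, exists_subset_image_iff]
  refine exists_congr fun T => and_congr_right fun _ => ?_
  rw [ncard_image_of_injective _ feedbackEdge_injective, edgesB_sdiff_image_feedbackEdge,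
    exists_isPerfectMatchingLeft_iff_closedLoop hrs (sdiff_subset.trans hE)]

/-- paper's Theorem 1, combinatorial core.  Suppose the bipartite
graph `G = ({1,…,r}, {1,…,s}, E)` has a perfect matching and `γ` is a positive
integer.  Then there is a set `T ⊆ E` with `|T| ≤ γ` such that `(V, Ṽ, E \ T)` has
no perfect matching iff there is a set `T̃ ⊆ E_K` with `|T̃| ≤ γ` such that `B − T̃`
has no perfect matching. -/
theorem blocker_correspondence (r s γ : ℕ) (hr : 0 < r) (hrs : r ≤ s) (hγ : 0 < γ)
    (E : Set (ℕ × ℕ)) (hE : E ⊆ Set.Icc 1 r ×ˢ Set.Icc 1 s)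
    (hG : ∃ M, IsPerfectMatchingLeft (Set.Icc 1 r) E M) :
    (∃ T ⊆ E, T.ncard ≤ γ ∧
        ¬ ∃ M, IsPerfectMatchingLeft (Set.Icc 1 r) (E \ T) M) ↔
    (∃ T ⊆ EKset E, T.ncard ≤ γ ∧
        ¬ ∃ M, IsPerfectMatchingOn (vertsB r s) (vertsB r s) (edgesB r s E \ T) M) := by
  exact blocker_correspondence_general r s γ hrs E hE

end ResilientFeedback
end

section
/- For every positive integer γ, a set T ⊆ {1,…,r} is γ-resilient if and only if T is a multi-cover of U with demand γ+1, i.e., every element e ∈ U satisfies |{i ∈ T : e ∈ S_i}| ≥ γ+1. (Paper's Lemma 3, correctness of the reduction of Algorithm 4.) -/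
namespace ResilientFeedback

/-- Two vertices lie in the same strongly connected component: each is reachable
from the other by a directed path. -/
def SameSCC {V : Type} (adj : V → V → Prop) (a b : V) : Prop :=
  Relation.ReflTransGen adj a b ∧ Relation.ReflTransGen adj b a

/-- Edge relation of the closed-loop digraph `D_T` of the reduction: a self-loop
`x_j → x_j` for every `j ∈ {1,…,N}`; `u_1 → x_j` for every `j ∈ {1,…,N}`;
`x_j → y_i` whenever `i ∈ {1,…,r}` and `j ∈ S i`; and the feedback edges
`y_i → u_1` for every `i ∈ T`. -/
def adjD (N r : ℕ) (S : ℕ → Set ℕ) (T : Set ℕ) : V3 → V3 → Prop := fun a b =>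
  (∃ j ∈ Set.Icc 1 N, a = xv j ∧ b = xv j) ∨
  (∃ j ∈ Set.Icc 1 N, a = uv 1 ∧ b = xv j) ∨
  (∃ i ∈ Set.Icc 1 r, ∃ j ∈ S i, a = xv j ∧ b = yv i) ∨
  (∃ i ∈ T, a = yv i ∧ b = uv 1)

/-- `T` is `γ`-resilient: for every `I ⊆ T` with `|I| ≤ γ`, every state vertex
`x_j` lies in the same SCC of `D_{T∖I}` as both endpoints of some feedback edge
`y_i → u_1` with `i ∈ T∖I`. -/
def Resilient (N r : ℕ) (S : ℕ → Set ℕ) (γ : ℕ) (T : Set ℕ) : Prop :=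
  ∀ I ⊆ T, I.ncard ≤ γ → ∀ j ∈ Set.Icc 1 N,
    ∃ i ∈ T \ I, SameSCC (adjD N r S (T \ I)) (xv j) (yv i) ∧
                 SameSCC (adjD N r S (T \ I)) (xv j) (uv 1)

/-- `T` is a multi-cover of the universe `{1,…,N}` with demand `α`: every element
`e ∈ {1,…,N}` satisfies `|{i ∈ T : e ∈ S_i}| ≥ α`. -/
def MultiCover (N : ℕ) (S : ℕ → Set ℕ) (α : ℕ) (T : Set ℕ) : Prop :=
  ∀ e ∈ Set.Icc 1 N, α ≤ {i ∈ T | e ∈ S i}.ncard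

/-! Removing `I` destroys the condition at `x_j` exactly when no remaining feedback edge leaves an
output measuring `x_j`: such an edge closes the cycle `x_j → y_i → u_1 → x_j`, while without one,
paths from `x_j` get stuck at outputs without feedback. So an attack on `x_j` has to contain all
of `{i ∈ T | j ∈ S i}`, and resilience says that this set is too large to be removed. -/

section Digraph

open Relation

variable {N r : ℕ} {S : ℕ → Set ℕ} {F : Set ℕ} {i j : ℕ} {v : V3}

theorem adjD_xv_iff : adjD N r S F (xv j) v ↔
    (j ∈ Set.Icc 1 N ∧ v = xv j) ∨ ∃ i ∈ Set.Icc 1 r, j ∈ S i ∧ v = yv i := by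
  simp [adjD, xv, uv, yv]

theorem adjD_yv_iff : adjD N r S F (yv i) v ↔ i ∈ F ∧ v = uv 1 := by
  simp [adjD, xv, uv, yv]

theorem adjD_uv_one_iff : adjD N r S F (uv 1) v ↔ ∃ j ∈ Set.Icc 1 N, v = xv j := by
  simp [adjD, xv, uv, yv]

theorem mem_of_reflTransGen_yv_uv_one (h : ReflTransGen (adjD N r S F) (yv i) (uv 1)) :
    i ∈ F := by
  obtain heq | ⟨_, hedge, -⟩ := h.cases_head
  · simp [yv, uv] at heq
  · exact (adjD_yv_iff.mp hedge).1

theorem exists_mem_of_reflTransGen_xv_uv_one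
    (h : ReflTransGen (adjD N r S F) (xv j) (uv 1)) : ∃ i ∈ F, j ∈ S i := by
  generalize hv : xv j = v at h
  induction h using ReflTransGen.head_induction_on with
  | refl => simp [xv, uv] at hv
  | head hedge hpath ih =>
    subst hv
    obtain ⟨-, rfl⟩ | ⟨i, -, hji, rfl⟩ := adjD_xv_iff.mp hedge
    · exact ih rfl
    · exact ⟨i, mem_of_reflTransGen_yv_uv_one hpath, hji⟩

theorem sameSCC_yv_and_uv_one (hj : j ∈ Set.Icc 1 N) (hi : i ∈ Set.Icc 1 r) (hiF : i ∈ F)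
    (hji : j ∈ S i) :
    SameSCC (adjD N r S F) (xv j) (yv i) ∧ SameSCC (adjD N r S F) (xv j) (uv 1) := by
  have state_output : ReflTransGen (adjD N r S F) (xv j) (yv i) :=
    .single (adjD_xv_iff.mpr (.inr ⟨i, hi, hji, rfl⟩))
  have output_input : ReflTransGen (adjD N r S F) (yv i) (uv 1) :=
    .single (adjD_yv_iff.mpr ⟨hiF, rfl⟩)
  have input_state : ReflTransGen (adjD N r S F) (uv 1) (xv j) :=
    .single (adjD_uv_one_iff.mpr ⟨j, hj, rfl⟩)
  exact ⟨⟨state_output, output_input.trans input_state⟩,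
    ⟨state_output.trans output_input, input_state⟩⟩

theorem exists_feedback_sameSCC_iff (hj : j ∈ Set.Icc 1 N) (hF : F ⊆ Set.Icc 1 r) :
    (∃ i ∈ F, SameSCC (adjD N r S F) (xv j) (yv i) ∧ SameSCC (adjD N r S F) (xv j) (uv 1)) ↔
      ∃ i ∈ F, j ∈ S i := by
  constructor
  · rintro ⟨-, -, -, hinput, -⟩
    exact exists_mem_of_reflTransGen_xv_uv_one hinput
  · rintro ⟨i, hiF, hji⟩
    exact ⟨i, hiF, sameSCC_yv_and_uv_one hj (hF hiF) hiF hji⟩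

end Digraph

theorem forall_exists_mem_sdiff_iff_lt_ncard {α : Type*} {T : Set α} (hT : T.Finite)
    (p : α → Prop) (n : ℕ) :
    (∀ I ⊆ T, I.ncard ≤ n → ∃ i ∈ T \ I, p i) ↔ n < {i ∈ T | p i}.ncard := by
  constructor
  · intro h
    by_contra! hle
    obtain ⟨i, ⟨hiT, hi⟩, hpi⟩ := h {i ∈ T | p i} (Set.sep_subset T p) hle
    exact hi ⟨hiT, hpi⟩
  · intro hlt I hIT hI
    obtain ⟨i, ⟨hiT, hpi⟩, hiI⟩ :=
      Set.exists_mem_notMem_of_ncard_lt_ncard (hI.trans_lt hlt) (hT.subset hIT)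
    exact ⟨i, ⟨hiT, hiI⟩, hpi⟩

theorem resilient_iff_forall_exists_mem_sdiff {N r : ℕ} {S : ℕ → Set ℕ} {γ : ℕ} {T : Set ℕ}
    (hT : T ⊆ Set.Icc 1 r) :
    Resilient N r S γ T ↔
      ∀ j ∈ Set.Icc 1 N, ∀ I ⊆ T, I.ncard ≤ γ → ∃ i ∈ T \ I, j ∈ S i := by
  have hscc (I : Set ℕ) {j : ℕ} (hj : j ∈ Set.Icc 1 N) :=
    exists_feedback_sameSCC_iff (S := S) hj (Set.sdiff_subset.trans hT : T \ I ⊆ Set.Icc 1 r)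
  exact ⟨fun h j hj I hIT hI => (hscc I hj).mp (h I hIT hI j hj),
    fun h I hIT hI j hj => (hscc I hj).mpr (h j hj I hIT hI)⟩

/-- paper's Lemma 3, correctness of the reduction of Algorithm 4.
For every positive integer `γ`, a set `T ⊆ {1,…,r}` is `γ`-resilient iff `T` is a
multi-cover of `U = {1,…,N}` with demand `γ + 1`. -/
theorem resilient_iff_multicover (N r : ℕ) (hN : 0 < N) (hr : 0 < r)
    (S : ℕ → Set ℕ) (hS : ∀ i ∈ Set.Icc 1 r, S i ⊆ Set.Icc 1 N)
    (hcov : ∀ e ∈ Set.Icc 1 N, ∃ i ∈ Set.Icc 1 r, e ∈ S i)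
    (γ : ℕ) (hγ : 0 < γ) (T : Set ℕ) (hT : T ⊆ Set.Icc 1 r) :
    Resilient N r S γ T ↔ MultiCover N S (γ + 1) T := by
  calc Resilient N r S γ T
      ↔ ∀ j ∈ Set.Icc 1 N, ∀ I ⊆ T, I.ncard ≤ γ → ∃ i ∈ T \ I, j ∈ S i :=
        resilient_iff_forall_exists_mem_sdiff hT
    _ ↔ MultiCover N S (γ + 1) T :=
        forall₂_congr fun j _ =>
          forall_exists_mem_sdiff_iff_lt_ncard ((Set.finite_Icc 1 r).subset hT) (j ∈ S ·) γ

end ResilientFeedback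
end

section
/- Let M be a perfect matching of B that minimizes |M' ∩ S| over all perfect matchings M' of B, and set F = M ∩ S. Then B − T has a perfect matching for every T ⊆ S with |T| = 2 if and only if both of the following hold: (a) B − T has a perfect matching for every two-element subset T ⊆ F, and (b) B − {f, e} has a perfect matching for every f ∈ F and every e ∈ S ∖ F. (Correctness of Algorithm 3, the matching part of the paper's Theorem 6.) -/
namespace ResilientFeedback

/-- A perfect matching of the bipartite graph `B = (V, Ṽ, Ed)` with
`|V| = |Ṽ|` (here `V`, `Ṽ` are the whole types `α`, `β`): a matching of size
`|V|`, i.e. one covering every vertex on both sides. -/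
def IsPerfectMatching {α β : Type} (Ed M : Set (α × β)) : Prop :=
  IsMatching Ed M ∧ (∀ a : α, ∃ b, (a, b) ∈ M) ∧ (∀ b : β, ∃ a, (a, b) ∈ M)

section Matching

variable {α β : Type} {Ed M T : Set (α × β)}

theorem isMatching_sdiff_iff : IsMatching (Ed \ T) M ↔ IsMatching Ed M ∧ Disjoint M T := by
  simp only [IsMatching, Set.subset_sdiff, and_right_comm]

theorem isPerfectMatching_sdiff_iff :
    IsPerfectMatching (Ed \ T) M ↔ IsPerfectMatching Ed M ∧ Disjoint M T := by
  simp only [IsPerfectMatching, isMatching_sdiff_iff, and_right_comm]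

end Matching

theorem forall_subset_ncard_eq_two_iff {γ : Type*} {F S : Set γ} {P : Set γ → Prop}
    (hFS : F ⊆ S) (hP : ∀ T ⊆ S \ F, T.ncard = 2 → P T) :
    (∀ T ⊆ S, T.ncard = 2 → P T) ↔
      (∀ T ⊆ F, T.ncard = 2 → P T) ∧ ∀ f ∈ F, ∀ e ∈ S \ F, P {f, e} := by
  constructor
  · intro h
    exact ⟨fun T hTF ↦ h T (hTF.trans hFS), fun f hf e he ↦
      h {f, e} (Set.pair_subset (hFS hf) he.1) (Set.ncard_pair (ne_of_mem_of_not_mem hf he.2))⟩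
  · rintro ⟨hinside, hmixed⟩ T hTS hT
    obtain ⟨x, y, -, rfl⟩ := Set.ncard_eq_two.mp hT
    obtain ⟨hxS, hyS⟩ := Set.pair_subset_iff.mp hTS
    by_cases hxF : x ∈ F <;> by_cases hyF : y ∈ F
    · exact hinside {x, y} (Set.pair_subset hxF hyF) hT
    · exact hmixed x hxF y ⟨hyS, hyF⟩
    · exact Set.pair_comm y x ▸ hmixed y hyF x ⟨hxS, hxF⟩
    · exact hP {x, y} (Set.pair_subset ⟨hxS, hxF⟩ ⟨hyS, hyF⟩) hT

theorem two_edge_resilience_check_general {α β : Type} {Ed S M F : Set (α × β)}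
    (hM : IsPerfectMatching Ed M) (hF : F = M ∩ S) :
    (∀ T ⊆ S, T.ncard = 2 → ∃ M', IsPerfectMatching (Ed \ T) M') ↔
      (∀ T ⊆ F, T.ncard = 2 → ∃ M', IsPerfectMatching (Ed \ T) M') ∧
        ∀ f ∈ F, ∀ e ∈ S \ F, ∃ M', IsPerfectMatching (Ed \ {f, e}) M' := by
  have disjoint_of_subset_sdiff {T : Set (α × β)} (hT : T ⊆ S \ F) : Disjoint M T := by
    rw [hF, Set.sdiff_inter_self_eq_sdiff] at hT
    exact Set.disjoint_sdiff_right.mono_right hT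
  exact forall_subset_ncard_eq_two_iff (hF.trans_subset Set.inter_subset_right) fun T hT _ ↦
    ⟨M, isPerfectMatching_sdiff_iff.mpr ⟨hM, disjoint_of_subset_sdiff hT⟩⟩

/-- correctness of Algorithm 3; matching part of the paper's
Theorem 6.  Let `M` be a perfect matching of `B` minimizing `|M' ∩ S|` over all
perfect matchings `M'` of `B`, and set `F = M ∩ S`.  Then `B − T` has a perfect
matching for every `T ⊆ S` with `|T| = 2` iff (a) `B − T` has a perfect matching
for every two-element `T ⊆ F`, and (b) `B − {f, e}` has a perfect matching for
every `f ∈ F` and `e ∈ S ∖ F`. -/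
theorem two_edge_resilience_check {α β : Type} [Fintype α] [Fintype β]
    (hcard : Fintype.card α = Fintype.card β)
    (Ed S : Set (α × β)) (hS : S ⊆ Ed)
    (M : Set (α × β)) (hM : IsPerfectMatching Ed M)
    (hmin : ∀ M', IsPerfectMatching Ed M' → (M ∩ S).ncard ≤ (M' ∩ S).ncard)
    (F : Set (α × β)) (hF : F = M ∩ S) :
    (∀ T ⊆ S, T.ncard = 2 → ∃ M', IsPerfectMatching (Ed \ T) M') ↔
    ((∀ T ⊆ F, T.ncard = 2 → ∃ M', IsPerfectMatching (Ed \ T) M') ∧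
     (∀ f ∈ F, ∀ e ∈ S \ F, ∃ M', IsPerfectMatching (Ed \ {f, e}) M')) :=
  two_edge_resilience_check_general hM hF

end ResilientFeedback
end
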